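/- Assume condition (R) holds. Let ν₁ and ν₂ be two ergodic invariant Radon measures with supp ν₁ ⊆ supp ν₂. Assume there exist a set M ⊆ ℝ unbounded above and below and an open interval J containing at least two points of supp ν₁ such that for every u ∈ M, for μ^⊗ℕ-almost every sequence (g₁, g₂, …) ∈ Γ^ℕ the set {n : (g_n∘⋯∘g_1)⁻¹(u) ∈ J} is finite. Then there exists a constant C > 0 such that ν₁ = C·ν₂. -/

import Mathlib

open MeasureTheory Filter Set Function Topology
open scoped ENNReal NNReal

section SDS

variable {ι : Type*}

/-- An orientation-preserving homeomorphism of `ℝ`, modeled as a strictly increasing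
surjection (such a map is automatically a homeomorphism of `ℝ`). -/
def IsOPH (g : ℝ → ℝ) : Prop := StrictMono g ∧ Function.Surjective g

/-- The Markov chain `X_n^x = g_{ω (n-1)} ∘ ⋯ ∘ g_{ω 0} (x)` driven by the sequence `ω`. -/
def chain (G : ι → ℝ → ℝ) (ω : ℕ → ι) (x : ℝ) : ℕ → ℝ
  | 0 => x
  | n + 1 => G (ω n) (chain G ω x n)

/-- Composition `G l₀ ∘ G l₁ ∘ ⋯` along a list `l`. -/
def comps (G : ι → ℝ → ℝ) (l : List ι) : ℝ → ℝ := l.foldr (fun i f => G i ∘ f) id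

/-- The semigroup `Γ*` generated by the maps `G i` under composition. -/
def sgen (G : ι → ℝ → ℝ) : Set (ℝ → ℝ) := {f | ∃ l : List ι, l ≠ [] ∧ f = comps G l}

variable [MeasurableSpace ι]

/-- `Q` is the product measure `μm^{⊗ℕ}` on `ι^ℕ` (for a discrete base measure `μm`
this property characterizes the product measure). -/
def IsProd (μm : Measure ι) (Q : Measure (ℕ → ι)) : Prop :=
  ∀ (n : ℕ) (c : ℕ → ι),
    Q {ω : ℕ → ι | ∀ k < n, ω k = c k} = ∏ k ∈ Finset.range n, μm {c k}

/-- A Radon measure on `ℝ`: a Borel measure which is finite on compact sets. -/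
def IsRadon (ν : Measure ℝ) : Prop := ∀ K : Set ℝ, IsCompact K → ν K < ⊤

/-- Invariance of `ν` for the system generated by the discrete measure `μm` on the
maps `G i`:  `∫ f dν = Σ_g μ(g) ∫ f(g x) dν(x)` for every continuous compactly
supported `f`. -/
def IsInv (G : ι → ℝ → ℝ) (μm : Measure ι) (ν : Measure ℝ) : Prop :=
  ∀ f : ℝ → ℝ, Continuous f → HasCompactSupport f →
    ∫ x, f x ∂ν = ∑' i : ι, (μm {i}).toReal * ∫ x, f (G i x) ∂ν

/-- Ergodicity: `ν` is invariant and any Borel set whose restriction is again invariant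
is either null or conull. -/
def IsErg (G : ι → ℝ → ℝ) (μm : Measure ι) (ν : Measure ℝ) : Prop :=
  IsInv G μm ν ∧
    ∀ A : Set ℝ, MeasurableSet A → IsInv G μm (ν.restrict A) → ν A = 0 ∨ ν Aᶜ = 0

/-- The support of a measure: points all of whose open neighbourhoods have positive
measure. -/
def msupp (ν : Measure ℝ) : Set ℝ := {x | ∀ U : Set ℝ, IsOpen U → x ∈ U → 0 < ν U}

/-- Condition (R): there is a compact interval visited infinitely often, a.s., from any
starting point. -/
def CondR (G : ι → ℝ → ℝ) (Q : Measure (ℕ → ι)) : Prop :=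
  ∃ a b : ℝ, a ≤ b ∧ ∀ x : ℝ, ∀ᵐ ω ∂Q, ∃ᶠ n in atTop, chain G ω x n ∈ Icc a b

/-- Condition (C): there is an interval `I` such that any compact set can be mapped
into `I` by an element of the semigroup `Γ*`. -/
def CondC (G : ι → ℝ → ℝ) : Prop :=
  ∃ a b : ℝ, ∀ K : Set ℝ, IsCompact K → ∃ g ∈ sgen G, g '' K ⊆ Icc a b

/-- Condition (U): from any point one can move both up and down. -/
def CondU (G : ι → ℝ → ℝ) : Prop :=
  ∀ x : ℝ, ∃ i j : ι, G i x < x ∧ x < G j x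

end SDS

/-- `ℓ_n⁻¹(u) = g_{ω 0}⁻¹ ∘ g_{ω 1}⁻¹ ∘ ⋯ ∘ g_{ω (n-1)}⁻¹ (u)`, the inverse of the
random walk applied to `u`. -/
noncomputable def invIter {ι : Type*} (G : ι → ℝ → ℝ) (ω : ℕ → ι) (u : ℝ) (n : ℕ) : ℝ :=
  ((List.range n).map ω).foldr (fun i y => Function.invFun (G i) y) u

/-- running maxima of Birkhoff sums -/
noncomputable def maxS {α : Type*} (T : α → α) (g : α → ℝ) : ℕ → α → ℝ
  | 0 => fun _ => 0
  | N + 1 => fun z => max 0 (g z + maxS T g N (T z))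

lemma maxS_nonneg {α : Type*} (T : α → α) (g : α → ℝ) (N : ℕ) (z : α) : 0 ≤ maxS T g N z := by
  cases N <;> simp [maxS]

lemma maxS_mono {α : Type*} (T : α → α) (g : α → ℝ) (N : ℕ) :
    ∀ z, maxS T g N z ≤ maxS T g (N+1) z := by
  induction N with
  | zero => intro z; exact maxS_nonneg T g 1 z
  | succ k ih =>
    intro z
    have := ih (T z)
    show max 0 (g z + maxS T g k (T z)) ≤ max 0 (g z + maxS T g (k+1) (T z))
    gcongr

lemma birk_le_maxS {α : Type*} (T : α → α) (g : α → ℝ) (N : ℕ) :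
    ∀ z, birkhoffSum T g N z ≤ maxS T g N z := by
  induction N with
  | zero => intro z; simp [maxS]
  | succ k ih =>
    intro z
    rw [birkhoffSum_succ']
    show _ ≤ max 0 (g z + maxS T g k (T z))
    exact le_max_of_le_right (by linarith [ih (T z)])

lemma maximal_ergodic {α : Type*} [MeasurableSpace α] {μ : Measure α} {T : α → α}
    (hT : MeasurePreserving T μ μ) {g : α → ℝ} (hg : Integrable g μ) (hgm : Measurable g)
    (h : ∀ᵐ z ∂μ, ∃ n, 0 < birkhoffSum T g n z) : 0 ≤ ∫ z, g z ∂μ := by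
  have hmeas : ∀ N, Measurable (maxS T g N) := by
    intro N
    induction N with
    | zero => exact measurable_const
    | succ k ih => exact measurable_const.max (hgm.add (ih.comp hT.measurable))
  have hint : ∀ N, Integrable (maxS T g N) μ := by
    intro N
    induction N with
    | zero => exact integrable_zero _ _ _
    | succ k ih =>
      have : Integrable (fun z => g z + maxS T g k (T z)) μ :=
        hg.add (hT.integrable_comp_of_integrable ih)
      exact (integrable_zero _ _ _).sup this
  have hE : ∀ N, MeasurableSet {z | 0 < maxS T g N z} := fun N =>
    measurableSet_lt measurable_const (hmeas N)
  have key : ∀ N, 0 ≤ ∫ z, ({z | 0 < maxS T g N z}).indicator g z ∂μ := by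
    intro N
    have h1 : ∫ z, (maxS T g N z - maxS T g N (T z)) ∂μ = 0 := by
      rw [integral_sub (hint N) (show Integrable (fun z => maxS T g N (T z)) μ from hT.integrable_comp_of_integrable (hint N)), sub_eq_zero]
      have := integral_map (μ := μ) hT.measurable.aemeasurable (f := maxS T g N)
        (hmeas N).aestronglyMeasurable
      rw [hT.map_eq] at this
      exact this
    refine h1.symm.le.trans ?_
    refine integral_mono ((hint N).sub (hT.integrable_comp_of_integrable (hint N)))
      (hg.indicator (hE N)) ?_
    intro z
    by_cases hz : 0 < maxS T g N z
    · simp only [indicator, mem_ofPred_eq, hz, if_true]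
      cases N with
      | zero => simp [maxS] at hz
      | succ k =>
        have h2 : maxS T g (k+1) z = max 0 (g z + maxS T g k (T z)) := rfl
        have h3 : maxS T g (k+1) z = g z + maxS T g k (T z) := by
          rw [h2] at hz ⊢
          exact max_eq_right (by by_contra hc; rw [max_eq_left (by linarith)] at hz; exact lt_irrefl _ hz)
        have := maxS_mono T g k (T z)
        linarith
    · simp only [indicator, mem_ofPred_eq, hz, if_false]
      have h1 := maxS_nonneg T g N z
      have h2 := maxS_nonneg T g N (T z)
      linarith
  have hlim : Tendsto (fun N => ∫ z, ({z | 0 < maxS T g N z}).indicator g z ∂μ) atTop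
      (𝓝 (∫ z, g z ∂μ)) := by
    refine tendsto_integral_of_dominated_convergence (fun z => ‖g z‖) ?_ hg.norm ?_ ?_
    · intro N; exact (hgm.indicator (hE N)).aestronglyMeasurable
    · intro N; exact Eventually.of_forall fun z => norm_indicator_le_norm_self _ _
    · filter_upwards [h] with z ⟨n, hn⟩
      refine tendsto_const_nhds.congr' ?_
      filter_upwards [eventually_ge_atTop n] with N hN
      have : 0 < maxS T g N z := by
        have h1 := birk_le_maxS T g n z
        have h2 := monotone_nat_of_le_succ (f := fun N => maxS T g N z)
          (fun N => maxS_mono T g N z) hN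
        simp only at h2
        linarith
      simp [indicator, this]
  exact ge_of_tendsto' hlim key

/-- cylinder -/
def cyl {ι : Type*} (n : ℕ) (c : ℕ → ι) : Set (ℕ → ι) := {ω | ∀ k < n, ω k = c k}

/-- prepend -/
def consS {ι : Type*} (i : ι) (ω : ℕ → ι) : ℕ → ι
  | 0 => i
  | n + 1 => ω n

section
variable {ι : Type*} [Countable ι] [MeasurableSpace ι] [DiscreteMeasurableSpace ι]

lemma measurableSet_cyl (n : ℕ) (c : ℕ → ι) : MeasurableSet (cyl n c) := by
  have : cyl n c = ⋂ k, ⋂ (_ : k < n), (fun ω : ℕ → ι => ω k) ⁻¹' {c k} := by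
    ext ω; simp [cyl]
  rw [this]
  exact MeasurableSet.iInter fun k => MeasurableSet.iInter fun _ =>
    (measurable_pi_apply k) (MeasurableSet.of_discrete)

lemma ext_cyl {P Q : Measure (ℕ → ι)} [IsFiniteMeasure P]
    (h : ∀ n c, P (cyl n c) = Q (cyl n c)) : P = Q := by
  rcases isEmpty_or_nonempty ι with hι | hι
  · have : IsEmpty (ℕ → ι) := ⟨fun f => hι.false (f 0)⟩
    exact Subsingleton.elim _ _
  obtain ⟨i0⟩ := hι
  refine ext_of_generate_finite (C := {s | ∃ n c, s = cyl n c}) ?_ ?_ ?_ ?_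
  · apply le_antisymm
    · refine iSup_le fun k => ?_
      rintro _ ⟨A, -, rfl⟩
      have : (fun ω : ℕ → ι => ω k) ⁻¹' A =
          ⋃ l : {l : Fin (k+1) → ι // l (Fin.last k) ∈ A},
            cyl (k+1) (fun j => if h : j < k+1 then l.1 ⟨j, h⟩ else i0) := by
        ext ω
        simp only [mem_preimage, mem_iUnion, cyl, mem_ofPred_eq]
        constructor
        · intro hω
          refine ⟨⟨fun j => ω j, hω⟩, ?_⟩
          intro j hj
          simp [hj]
        · rintro ⟨⟨l, hl⟩, h⟩
          have := h k (Nat.lt_succ_self k)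
          simp only [Nat.lt_succ_self, dite_true] at this
          rw [this]; exact hl
      show MeasurableSet[MeasurableSpace.generateFrom _] ((fun ω : ℕ → ι => ω k) ⁻¹' A)
      rw [this]
      refine @MeasurableSet.iUnion _ _ (MeasurableSpace.generateFrom _) _ _ fun l => ?_
      exact MeasurableSpace.measurableSet_generateFrom ⟨_, _, rfl⟩
    · refine MeasurableSpace.generateFrom_le ?_
      rintro _ ⟨n, c, rfl⟩
      exact measurableSet_cyl n c
  · rintro _ ⟨n, c, rfl⟩ _ ⟨m, d, rfl⟩ ⟨ω, h1, h2⟩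
    refine ⟨max n m, ω, ?_⟩
    ext ω'
    constructor
    · rintro ⟨h3, h4⟩ k hk
      rcases lt_max_iff.1 hk with hk | hk
      · rw [h3 k hk, h1 k hk]
      · rw [h4 k hk, h2 k hk]
    · intro h3
      exact ⟨fun k hk => by rw [h3 k (lt_max_of_lt_left hk), h1 k hk],
        fun k hk => by rw [h3 k (lt_max_of_lt_right hk), h2 k hk]⟩
  · rintro _ ⟨n, c, rfl⟩; exact h n c
  · have := h 0 (fun _ => i0)
    simpa [cyl] using this

lemma IsProd.prob {m : Measure ι} {Q : Measure (ℕ → ι)} (hQ : IsProd m Q) [Nonempty ι] :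
    IsProbabilityMeasure Q := by
  constructor
  have := hQ 0 (fun _ => Classical.arbitrary ι)
  simpa using this

lemma measurable_consS : Measurable (fun p : ι × (ℕ → ι) => consS p.1 p.2) := by
  refine measurable_pi_lambda _ fun n => ?_
  cases n with
  | zero => exact measurable_fst
  | succ n => exact (measurable_pi_apply n).comp measurable_snd

lemma map_consS {m : Measure ι} [IsProbabilityMeasure m] {Q : Measure (ℕ → ι)} (hQ : IsProd m Q) :
    (m.prod Q).map (fun p => consS p.1 p.2) = Q := by
  have : Nonempty ι := nonempty_of_isProbabilityMeasure m
  have := hQ.prob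
  have : IsProbabilityMeasure ((m.prod Q).map (fun p : ι × (ℕ → ι) => consS p.1 p.2)) :=
    Measure.isProbabilityMeasure_map measurable_consS.aemeasurable
  refine ext_cyl fun n c => ?_
  rw [Measure.map_apply measurable_consS (measurableSet_cyl n c)]
  cases n with
  | zero =>
    have : (cyl 0 c) = univ := by simp [cyl]
    simp [this]
  | succ n =>
    have : (fun p : ι × (ℕ → ι) => consS p.1 p.2) ⁻¹' (cyl (n+1) c) =
        {c 0} ×ˢ (cyl n (fun k => c (k+1))) := by
      ext ⟨i, ω⟩
      simp only [cyl, mem_preimage, mem_ofPred_eq, mem_prod, mem_singleton_iff]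
      constructor
      · intro h
        exact ⟨h 0 (Nat.succ_pos _), fun k hk => h (k+1) (Nat.succ_lt_succ hk)⟩
      · rintro ⟨h1, h2⟩ k hk
        cases k with
        | zero => exact h1
        | succ k => exact h2 k (Nat.lt_of_succ_lt_succ hk)
    rw [this, Measure.prod_prod]
    have h1 := hQ n (fun k => c (k+1))
    have h2 := hQ (n+1) c
    rw [show cyl (n+1) c = {ω | ∀ k < n+1, ω k = c k} from rfl, h2, Finset.prod_range_succ',
      show cyl n (fun k => c (k+1)) = {ω | ∀ k < n, ω k = c (k+1)} from rfl, h1, mul_comm]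

lemma lintegral_consS {m : Measure ι} [IsProbabilityMeasure m] {Q : Measure (ℕ → ι)}
    (hQ : IsProd m Q) {F : (ℕ → ι) → ℝ≥0∞} (hF : Measurable F) :
    ∫⁻ ω, F ω ∂Q = ∫⁻ i, ∫⁻ ω, F (consS i ω) ∂Q ∂m := by
  have : Nonempty ι := nonempty_of_isProbabilityMeasure m
  have := hQ.prob
  conv_lhs => rw [← map_consS hQ, lintegral_map hF measurable_consS]
  exact lintegral_prod _ (hF.comp measurable_consS).aemeasurable

end

/-- push-forward of `ν` by one step of the chain -/
noncomputable def pushM {ι : Type*} [MeasurableSpace ι] (G : ι → ℝ → ℝ) (m : Measure ι)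
    (ν : Measure ℝ) : Measure ℝ := Measure.sum (fun i => m {i} • ν.map (G i))

lemma IsOPH.cont {g : ℝ → ℝ} (h : IsOPH g) : Continuous g :=
  h.1.monotone.continuous_of_surjective h.2

lemma IsOPH.cs {g : ℝ → ℝ} (h : IsOPH g) {f : ℝ → ℝ} (hf : HasCompactSupport f) :
    HasCompactSupport (fun x => f (g x)) :=
  hf.comp_homeomorph (StrictMono.orderIsoOfSurjective g h.1 h.2).toHomeomorph

section
variable {ι : Type*} [Countable ι] [MeasurableSpace ι] {G : ι → ℝ → ℝ} (hG : ∀ i, IsOPH (G i))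
  {m : Measure ι} [IsProbabilityMeasure m] {ν : Measure ℝ}
include hG

lemma lintegral_pushM {F : ℝ → ℝ≥0∞} (hF : Measurable F) :
    ∫⁻ x, F x ∂(pushM G m ν) = ∑' i, m {i} * ∫⁻ x, F (G i x) ∂ν := by
  rw [pushM, lintegral_sum_measure]
  congr 1; ext i
  rw [lintegral_smul_measure, lintegral_map hF (hG i).cont.measurable, smul_eq_mul]

lemma pushM_apply {s : Set ℝ} (hs : MeasurableSet s) :
    (pushM G m ν) s = ∑' i, m {i} * ν (G i ⁻¹' s) := by
  rw [pushM, Measure.sum_apply _ hs]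
  congr 1; ext i
  rw [Measure.smul_apply, Measure.map_apply (hG i).cont.measurable hs, smul_eq_mul]

lemma integral_pushM [IsFiniteMeasureOnCompacts (pushM G m ν)] {f : ℝ → ℝ} (hf : Continuous f)
    (hc : HasCompactSupport f) :
    ∫ x, f x ∂(pushM G m ν) = ∑' i, (m {i}).toReal * ∫ x, f (G i x) ∂ν := by
  have hi : Integrable f (pushM G m ν) := hf.integrable_of_hasCompactSupport hc
  have := (hasSum_integral_measure hi).tsum_eq
  rw [pushM, ← this]
  congr 1; ext i
  rw [integral_smul_measure, integral_map (hG i).cont.measurable.aemeasurable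
    hf.aestronglyMeasurable, smul_eq_mul]

lemma isInv_of_pushM [IsFiniteMeasureOnCompacts ν] (h : pushM G m ν = ν) : IsInv G m ν := by
  intro f hf hc
  have : IsFiniteMeasureOnCompacts (pushM G m ν) := by rw [h]; infer_instance
  rw [← integral_pushM hG hf hc, h]

lemma pushM_of_isInv (hr : IsRadon ν) (h0 : ν ≠ 0) (h : IsInv G m ν) : pushM G m ν = ν := by
  have : IsFiniteMeasureOnCompacts ν := ⟨fun K hK => hr K hK⟩
  have hfin : IsFiniteMeasureOnCompacts (pushM G m ν) := by
    constructor
    intro K hK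
    obtain ⟨N, hN⟩ : ∃ N : ℕ, ν (Icc (-(N:ℝ)) N) ≠ 0 := by
      by_contra hc
      push Not at hc
      apply h0
      rw [← Measure.measure_univ_eq_zero]
      have : (univ : Set ℝ) = ⋃ N : ℕ, Icc (-(N:ℝ)) N := by
        ext x
        simp only [mem_univ, mem_iUnion, mem_Icc, true_iff]
        obtain ⟨N, hN⟩ := exists_nat_ge |x|
        exact ⟨N, by linarith [neg_abs_le x], by linarith [le_abs_self x]⟩
      rw [this, measure_iUnion_null_iff]
      exact hc
    obtain ⟨f, hf1, -, hfc, hf01⟩ := exists_continuous_one_zero_of_isCompact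
      (hK.union (isCompact_Icc (a := -(N:ℝ)) (b := N))) isClosed_empty (disjoint_empty _)
    have hfi : Integrable f ν := f.continuous.integrable_of_hasCompactSupport hfc
    have hpos : 0 < ∫ x, f x ∂ν := by
      rw [integral_pos_iff_support_of_nonneg (fun x => (hf01 x).1) hfi]
      refine lt_of_lt_of_le (pos_iff_ne_zero.2 hN) (measure_mono ?_)
      intro x hx
      have := hf1 (Or.inr hx)
      simp only [Pi.one_apply] at this
      simp [this]
    have hinv := h f f.continuous hfc
    have hsum : Summable fun i => (m {i}).toReal * ∫ x, f (G i x) ∂ν := by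
      by_contra hns
      rw [tsum_eq_zero_of_not_summable hns] at hinv
      linarith
    have hle : (pushM G m ν) K ≤ ∫⁻ x, ENNReal.ofReal (f x) ∂(pushM G m ν) := by
      rw [← lintegral_indicator_one hK.measurableSet]
      refine lintegral_mono fun x => ?_
      by_cases hx : x ∈ K
      · have := hf1 (Or.inl hx)
        simp only [Pi.one_apply] at this
        simp [hx, this]
      · simp [hx]
    refine lt_of_le_of_lt hle ?_
    rw [lintegral_pushM hG f.continuous.measurable.ennreal_ofReal]
    have : ∀ i, m {i} * ∫⁻ x, ENNReal.ofReal (f (G i x)) ∂ν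
        = ENNReal.ofReal ((m {i}).toReal * ∫ x, f (G i x) ∂ν) := by
      intro i
      rw [ENNReal.ofReal_mul ENNReal.toReal_nonneg, ENNReal.ofReal_toReal (measure_ne_top _ _),
        ofReal_integral_eq_lintegral_ofReal]
      · exact (f.continuous.comp (hG i).cont).integrable_of_hasCompactSupport ((hG i).cs hfc)
      · exact Eventually.of_forall fun x => (hf01 _).1
    simp_rw [this]
    rw [← ENNReal.ofReal_tsum_of_nonneg _ hsum]
    · exact ENNReal.ofReal_lt_top
    · intro i
      exact mul_nonneg ENNReal.toReal_nonneg (integral_nonneg fun x => (hf01 _).1)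
  have : IsLocallyFiniteMeasure (pushM G m ν) := isLocallyFiniteMeasure_of_isFiniteMeasureOnCompacts
  have : IsLocallyFiniteMeasure ν := isLocallyFiniteMeasure_of_isFiniteMeasureOnCompacts
  apply Measure.ext_of_integral_eq_on_compactlySupported
  intro f
  exact (integral_pushM hG f.continuous f.hasCompactSupport).trans
    (h f f.continuous f.hasCompactSupport).symm

lemma inv_lint [DiscreteMeasurableSpace ι] (h : pushM G m ν = ν) {F : ℝ → ℝ≥0∞}
    (hF : Measurable F) : ∫⁻ x, ∫⁻ i, F (G i x) ∂m ∂ν = ∫⁻ x, F x ∂ν := by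
  conv_rhs => rw [← h, lintegral_pushM hG hF]
  simp_rw [lintegral_countable']
  rw [lintegral_tsum]
  · congr 1; ext i
    rw [lintegral_mul_const _ (show Measurable fun x => F (G i x) from hF.comp (hG i).cont.measurable), mul_comm]
  · intro i
    exact ((hF.comp (hG i).cont.measurable).mul_const _).aemeasurable
end

/-- the skew product -/
def skew {ι : Type*} (G : ι → ℝ → ℝ) (z : ℝ × (ℕ → ι)) : ℝ × (ℕ → ι) :=
  (G (z.2 0) z.1, fun n => z.2 (n+1))

lemma skew_iterate {ι : Type*} (G : ι → ℝ → ℝ) (n : ℕ) (x : ℝ) (ω : ℕ → ι) :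
    (skew G)^[n] (x, ω) = (chain G ω x n, fun k => ω (k + n)) := by
  induction n with
  | zero => rfl
  | succ n ih =>
    rw [iterate_succ_apply', ih]
    simp only [skew, chain, zero_add]
    congr 1
    funext k
    congr 1; omega

lemma skew_cons {ι : Type*} (G : ι → ℝ → ℝ) (i : ι) (x : ℝ) (ω : ℕ → ι) :
    skew G (x, consS i ω) = (G i x, ω) := rfl

lemma chain_cons {ι : Type*} (G : ι → ℝ → ℝ) (i : ι) (x : ℝ) (ω : ℕ → ι) (n : ℕ) :
    chain G (consS i ω) x (n+1) = chain G ω (G i x) n := by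
  induction n with
  | zero => rfl
  | succ n ih =>
    rw [chain, ih]; rfl

lemma chain_strictMono {ι : Type*} {G : ι → ℝ → ℝ} (hG : ∀ i, IsOPH (G i)) (ω : ℕ → ι) (n : ℕ) :
    StrictMono (fun x => chain G ω x n) := by
  induction n with
  | zero => exact strictMono_id
  | succ n ih => exact (hG _).1.comp ih

section
variable {ι : Type*} [Countable ι] [MeasurableSpace ι] [DiscreteMeasurableSpace ι]
  {G : ι → ℝ → ℝ} (hG : ∀ i, IsOPH (G i))
  {m : Measure ι} [IsProbabilityMeasure m] {ν : Measure ℝ} {Q : Measure (ℕ → ι)}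
include hG

lemma measurable_step : Measurable (fun p : ℝ × ι => G p.2 p.1) :=
  measurable_from_prod_countable_left fun i => (hG i).cont.measurable

lemma measurable_skew : Measurable (skew G) := by
  refine Measurable.prodMk ?_ ?_
  · exact (measurable_step hG).comp
      (measurable_fst.prodMk ((measurable_pi_apply 0).comp measurable_snd))
  · exact measurable_pi_lambda _ fun n => (measurable_pi_apply (n+1)).comp measurable_snd

lemma measurable_chain (n : ℕ) : Measurable (fun z : ℝ × (ℕ → ι) => chain G z.2 z.1 n) := by
  have : (fun z : ℝ × (ℕ → ι) => chain G z.2 z.1 n) = fun z => ((skew G)^[n] z).1 := by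
    ext ⟨x, ω⟩; rw [skew_iterate]
  rw [this]
  exact measurable_fst.comp ((measurable_skew hG).iterate n)

lemma skew_mp [SFinite ν] (hQ : IsProd m Q) (h : pushM G m ν = ν) :
    MeasurePreserving (skew G) (ν.prod Q) (ν.prod Q) := by
  have : Nonempty ι := nonempty_of_isProbabilityMeasure m
  have := hQ.prob
  refine ⟨measurable_skew hG, ?_⟩
  ext s hs
  rw [Measure.map_apply (measurable_skew hG) hs, Measure.prod_apply (measurable_skew hG hs),
    Measure.prod_apply hs, ← inv_lint hG h (measurable_measure_prodMk_left hs)]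
  congr 1; ext x
  have hs' : MeasurableSet (Prod.mk x ⁻¹' (skew G ⁻¹' s)) :=
    measurable_prodMk_left (measurable_skew hG hs)
  rw [← lintegral_indicator_one hs', lintegral_consS hQ (measurable_one.indicator hs')]
  congr 1; ext i
  rw [← lintegral_indicator_one (measurable_prodMk_left hs)]
  rfl

end

lemma tsum_indicator_top {p : ℕ → Prop} (h : ∃ᶠ n in atTop, p n) {f : ℕ → ℝ≥0∞} {δ : ℝ≥0∞}
    (hδ : δ ≠ 0) (hf : ∀ n, p n → δ ≤ f n) : ∑' n, f n = ∞ := by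
  by_contra hne
  have h1 := ENNReal.tendsto_cofinite_zero_of_tsum_ne_top hne
  rw [Nat.cofinite_eq_atTop] at h1
  have h2 := h1.eventually (gt_mem_nhds (pos_iff_ne_zero.2 hδ))
  obtain ⟨n, hn1, hn2⟩ := (h.and_eventually h2).exists
  exact absurd (hf n hn1) (not_le.2 hn2)

lemma conservative_of_recurrent {α : Type*} [MeasurableSpace α] {μ : Measure α} {T : α → α}
    (hT : MeasurePreserving T μ μ) {K : Set α} (hK : MeasurableSet K) (hKf : μ K ≠ ∞)
    (hrec : ∀ᵐ z ∂μ, ∃ᶠ n in atTop, T^[n] z ∈ K) : Conservative T μ := by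
  refine ⟨hT.quasiMeasurePreserving, ?_⟩
  intro W hW hW0
  by_contra hcon
  push Not at hcon
  have hmeasn : ∀ n, MeasurableSet (T^[n] ⁻¹' K) := fun n => (hT.measurable.iterate n) hK
  have hmeasW : ∀ n, MeasurableSet (T^[n] ⁻¹' W) := fun n => (hT.measurable.iterate n) hW
  have h1 : ∀ N, ∑ n ∈ Finset.range (N+1), μ (W ∩ T^[n] ⁻¹' K) ≤ μ K := by
    intro N
    have h2 : ∀ n ∈ Finset.range (N+1), μ (W ∩ T^[n] ⁻¹' K)
        = μ (T^[N - n] ⁻¹' W ∩ T^[N] ⁻¹' K) := by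
      intro n hn
      rw [← (hT.iterate (N - n)).measure_preimage (hW.inter (hmeasn n)).nullMeasurableSet]
      congr 1
      rw [preimage_inter, ← preimage_comp, ← iterate_add]
      have : n + (N - n) = N := by have := Finset.mem_range.1 hn; omega
      rw [this]
    rw [Finset.sum_congr rfl h2, ← measure_biUnion_finset]
    · rw [← (hT.iterate N).measure_preimage hK.nullMeasurableSet]
      apply measure_mono
      intro z hz
      simp only [mem_iUnion] at hz
      obtain ⟨_, _, hz⟩ := hz
      exact hz.2
    · have key : ∀ i j, i < j → j < N + 1 → ∀ z, z ∈ T^[N - i] ⁻¹' W → z ∈ T^[N - j] ⁻¹' W →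
          False := by
        intro i j hij hj z hz1 hz2
        refine hcon _ hz2 (j - i) (by omega) ?_
        rw [← iterate_add_apply]
        have : j - i + (N - j) = N - i := by omega
        rw [this]; exact hz1
      intro i hi j hj hij
      rw [Function.onFun, Set.disjoint_left]
      intro z hz1 hz2
      rcases lt_or_gt_of_ne hij with h | h
      · exact key i j h (Finset.mem_range.1 hj) z hz1.1 hz2.1
      · exact key j i h (Finset.mem_range.1 hi) z hz2.1 hz1.1
    · intro n _
      exact (hmeasW _).inter (hmeasn N)
  have h3 : ∑' n, μ (W ∩ T^[n] ⁻¹' K) ≤ μ K := by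
    refine ENNReal.tsum_le_of_sum_range_le fun n => ?_
    exact (Finset.sum_le_sum_of_subset (Finset.range_mono (Nat.le_succ n))).trans (h1 n)
  have h4 : ∑' n, μ (W ∩ T^[n] ⁻¹' K)
      = ∫⁻ z in W, ∑' n, (T^[n] ⁻¹' K).indicator 1 z ∂μ := by
    rw [lintegral_tsum]
    · congr 1; ext n
      rw [lintegral_indicator_one (hmeasn n), Measure.restrict_apply (hmeasn n), inter_comm]
    · intro n; exact (measurable_one.indicator (hmeasn n)).aemeasurable
  have h5 : ∫⁻ z in W, ∑' n, (T^[n] ⁻¹' K).indicator (1 : α → ℝ≥0∞) z ∂μ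
      = ∫⁻ z in W, ∞ ∂μ := by
    refine lintegral_congr_ae ?_
    filter_upwards [ae_restrict_of_ae hrec] with z hz
    refine tsum_indicator_top hz one_ne_zero ?_
    intro n hn
    have : z ∈ T^[n] ⁻¹' K := hn
    simp [this]
  rw [h4, h5] at h3
  simp only [lintegral_const, Measure.restrict_apply MeasurableSet.univ, univ_inter] at h3
  rw [ENNReal.top_mul hW0] at h3
  exact hKf (top_le_iff.1 h3)

section
variable {ι : Type*} [Countable ι] [MeasurableSpace ι] [DiscreteMeasurableSpace ι]
  {G : ι → ℝ → ℝ} (hG : ∀ i, IsOPH (G i))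
  {m : Measure ι} [IsProbabilityMeasure m] {ν : Measure ℝ} {Q : Measure (ℕ → ι)}
include hG

lemma skew_cons_rec [IsFiniteMeasureOnCompacts ν] (hQ : IsProd m Q) (h : pushM G m ν = ν)
    (hR : CondR G Q) : Conservative (skew G) (ν.prod Q) := by
  have : Nonempty ι := nonempty_of_isProbabilityMeasure m
  have := hQ.prob
  obtain ⟨a, b, -, hab⟩ := hR
  refine conservative_of_recurrent (skew_mp hG hQ h) (K := Icc a b ×ˢ univ)
    (measurableSet_Icc.prod MeasurableSet.univ) ?_ ?_
  · rw [Measure.prod_prod, measure_univ, mul_one]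
    exact isCompact_Icc.measure_lt_top.ne
  · have hm : MeasurableSet {z : ℝ × (ℕ → ι) | ∃ᶠ n in atTop, chain G z.2 z.1 n ∈ Icc a b} := by
      exact MeasurableSet.measurableSet_limsup (s := fun n => {z : ℝ × (ℕ → ι) | chain G z.2 z.1 n ∈ Icc a b})
        (fun n => measurable_chain hG n measurableSet_Icc) |> fun h => by
          rw [limsup_eq_iInf_iSup_of_nat] at h
          convert h using 1
          ext z
          simp only [frequently_atTop, mem_ofPred_eq, mem_Icc, iInf_eq_iInter, iSup_eq_iUnion, mem_iInter, mem_iUnion, exists_prop, ge_iff_le]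
    have : ∀ᵐ z ∂(ν.prod Q), ∃ᶠ n in atTop, chain G z.2 z.1 n ∈ Icc a b := by
      rw [Measure.ae_prod_iff_ae_ae hm]
      exact Eventually.of_forall fun x => hab x
    filter_upwards [this] with ⟨x, ω⟩ hz
    refine hz.mono fun n hn => ?_
    rw [skew_iterate]
    exact ⟨hn, mem_univ _⟩

/-- if the expected total of `w` along the chain is bounded, `w` vanishes a.e. -/
lemma ae_zero_of_potential [IsFiniteMeasureOnCompacts ν] (hQ : IsProd m Q) (h : pushM G m ν = ν)
    (hR : CondR G Q) {w ψ : ℝ → ℝ≥0∞} (hw : Measurable w)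
    (hψ1 : ∀ x, ψ x ≤ 1) (hsub : ∀ x, ψ x + w x = ∫⁻ i, ψ (G i x) ∂m) :
    ∀ᵐ x ∂ν, w x = 0 := by
  have : Nonempty ι := nonempty_of_isProbabilityMeasure m
  have := hQ.prob
  have hmc : ∀ x n, Measurable fun ω : ℕ → ι => w (chain G ω x n) := fun x n =>
    hw.comp ((measurable_chain hG n).comp measurable_prodMk_left)
  have hu : ∀ N x, ψ x + ∑ n ∈ Finset.range N, ∫⁻ ω, w (chain G ω x n) ∂Q ≤ 1 := by
    intro N
    induction N with
    | zero => intro x; simpa using hψ1 x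
    | succ N ih =>
      intro x
      rw [Finset.sum_range_succ']
      have h0 : ∫⁻ ω, w (chain G ω x 0) ∂Q = w x := by simp [chain]
      have h1 : ∀ n, ∫⁻ ω, w (chain G ω x (n+1)) ∂Q
          = ∫⁻ i, ∫⁻ ω, w (chain G ω (G i x) n) ∂Q ∂m := by
        intro n
        rw [lintegral_consS hQ (hmc x (n+1))]
        simp_rw [chain_cons]
      simp_rw [h0, h1]
      rw [add_comm _ (w x), ← add_assoc, hsub,
        ← lintegral_finsetSum _ (fun _ _ => measurable_of_countable _),
        ← lintegral_add_left (measurable_of_countable _)]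
      calc _ ≤ ∫⁻ i, 1 ∂m := lintegral_mono fun i => ih (G i x)
        _ = 1 := by simp
  have hfin : ∀ x, ∀ᵐ ω ∂Q, ∑' n, w (chain G ω x n) ≠ ∞ := by
    intro x
    have h1 : ∫⁻ ω, ∑' n, w (chain G ω x n) ∂Q ≤ 1 := by
      rw [lintegral_tsum (fun n => (hmc x n).aemeasurable)]
      refine ENNReal.tsum_le_of_sum_range_le fun n => ?_
      exact le_trans le_add_self (hu n x)
    have := ae_lt_top (Measurable.ennreal_tsum (hmc x)) (ne_top_of_le_ne_top ENNReal.one_ne_top h1)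
    filter_upwards [this] with ω hω using hω.ne
  have hC := skew_cons_rec hG hQ h hR
  have hδ : ∀ k : ℕ, ∀ᵐ x ∂ν, w x ≤ ((k:ℝ≥0∞) + 1)⁻¹ := by
    intro k
    set δ : ℝ≥0∞ := ((k:ℝ≥0∞) + 1)⁻¹
    have hδ0 : δ ≠ 0 := ENNReal.inv_ne_zero.2 (by simp)
    have hB : MeasurableSet {z : ℝ × (ℕ → ι) | δ < w z.1} :=
      measurableSet_lt measurable_const (hw.comp measurable_fst)
    have h1 := hC.ae_mem_imp_frequently_image_mem hB.nullMeasurableSet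
    have h2 := Measure.ae_ae_of_ae_prod h1
    filter_upwards [h2] with x hx
    by_contra hlt
    push Not at hlt
    obtain ⟨ω, h3, h4⟩ := (hx.and (hfin x)).exists
    refine h4 (tsum_indicator_top (h3 hlt) hδ0 ?_)
    intro n hn
    rw [skew_iterate] at hn
    exact le_of_lt hn
  rw [← ae_all_iff] at hδ
  filter_upwards [hδ] with x hx
  by_contra hne
  obtain ⟨n, hn⟩ := ENNReal.exists_inv_nat_lt hne
  have := (hx n).trans (ENNReal.inv_le_inv.2 (le_self_add (a := (n:ℝ≥0∞)) (b := 1)))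
  exact absurd this (not_le.2 hn)
end

section
variable {ι : Type*} [Countable ι] [MeasurableSpace ι] [DiscreteMeasurableSpace ι]
  {G : ι → ℝ → ℝ} (hG : ∀ i, IsOPH (G i))
  {m : Measure ι} [IsProbabilityMeasure m] {ν : Measure ℝ} {Q : Measure (ℕ → ι)}
include hG

lemma ae_step (hpos : ∀ i, 0 < m {i}) (h : pushM G m ν = ν) {p : ℝ → Prop}
    (hp : ∀ᵐ x ∂ν, p x) : ∀ᵐ x ∂ν, ∀ i, p (G i x) := by
  rw [ae_all_iff]
  intro i
  rw [← h, pushM, Measure.ae_sum_iff] at hp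
  have h1 := hp i
  rw [ae_iff] at h1
  rw [Measure.smul_apply, smul_eq_mul, mul_eq_zero] at h1
  have h2 := h1.resolve_left (hpos i).ne'
  exact ae_of_ae_map (hG i).cont.measurable.aemeasurable h2

lemma fiber_step (hQ : IsProd m Q) {A : Set (ℝ × (ℕ → ι))} (hA : MeasurableSet A)
    (hinv : skew G ⁻¹' A = A) (x : ℝ) {B : Set (ℕ → ι)} (hB : MeasurableSet B) :
    Q (Prod.mk x ⁻¹' A ∩ B) = ∫⁻ i, Q (Prod.mk (G i x) ⁻¹' A ∩ consS i ⁻¹' B) ∂m := by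
  have hm : MeasurableSet (Prod.mk x ⁻¹' A ∩ B) := (measurable_prodMk_left hA).inter hB
  have hc : ∀ i : ι, Measurable (consS i : (ℕ → ι) → _) := fun i =>
    measurable_consS.comp measurable_prodMk_left
  rw [← lintegral_indicator_one hm, lintegral_consS hQ (measurable_one.indicator hm)]
  congr 1; ext i
  have hm' : MeasurableSet (Prod.mk (G i x) ⁻¹' A ∩ consS i ⁻¹' B) :=
    (measurable_prodMk_left hA).inter (hc i hB)
  rw [← lintegral_indicator_one hm']
  congr 1; ext ω
  have : consS i ω ∈ Prod.mk x ⁻¹' A ∩ B ↔ ω ∈ Prod.mk (G i x) ⁻¹' A ∩ consS i ⁻¹' B := by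
    simp only [mem_inter_iff, mem_preimage]
    rw [← skew_cons G i x ω]
    conv_lhs => rw [← hinv]
    rfl
  by_cases hω : ω ∈ Prod.mk (G i x) ⁻¹' A ∩ consS i ⁻¹' B
  · rw [indicator_of_mem hω, indicator_of_mem (this.2 hω)]; rfl
  · rw [indicator_of_notMem hω, indicator_of_notMem (fun h => hω (this.1 h))]

lemma fiber_const [IsFiniteMeasureOnCompacts ν] (hpos : ∀ i, 0 < m {i}) (hQ : IsProd m Q)
    (h : pushM G m ν = ν) (hR : CondR G Q) {A : Set (ℝ × (ℕ → ι))} (hA : MeasurableSet A)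
    (hinv : skew G ⁻¹' A = A) :
    ∀ᵐ x ∂ν, ∀ i, Q (Prod.mk (G i x) ⁻¹' A) = Q (Prod.mk x ⁻¹' A) := by
  have : Nonempty ι := nonempty_of_isProbabilityMeasure m
  have := hQ.prob
  set φ : ℝ → ℝ := fun x => Q.real (Prod.mk x ⁻¹' A) with hφ
  have hφm : Measurable φ := (measurable_measure_prodMk_left hA).ennreal_toReal
  have hφ0 : ∀ x, 0 ≤ φ x := fun x => measureReal_nonneg
  have hφ1 : ∀ x, φ x ≤ 1 := fun x => measureReal_le_one
  have hint : ∀ x, Integrable (fun i => φ (G i x)) m := fun x =>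
    Integrable.of_bound (measurable_of_countable _).aestronglyMeasurable 1
      (Eventually.of_forall fun i => by rw [Real.norm_eq_abs, abs_of_nonneg (hφ0 _)]; exact hφ1 _)
  have hint2 : ∀ x, Integrable (fun i => φ (G i x) ^ 2) m := fun x =>
    Integrable.of_bound (measurable_of_countable _).aestronglyMeasurable 1
      (Eventually.of_forall fun i => by
        rw [Real.norm_eq_abs, abs_of_nonneg (sq_nonneg _)]
        nlinarith [hφ0 (G i x), hφ1 (G i x)])
  have hharm : ∀ x, ∫ i, φ (G i x) ∂m = φ x := by
    intro x
    have h1 := fiber_step hG hQ hA hinv x (B := univ) MeasurableSet.univ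
    simp only [inter_univ, preimage_univ] at h1
    simp only [hφ, Measure.real]
    rw [integral_toReal (measurable_of_countable _).aemeasurable
      (Eventually.of_forall fun i => measure_lt_top _ _), h1]
  have hvint : ∀ x, Integrable (fun i => (φ (G i x) - φ x) ^ 2) m := fun x => by
    have : (fun i => (φ (G i x) - φ x) ^ 2)
      = fun i => φ (G i x) ^ 2 - 2 * φ x * φ (G i x) + φ x ^ 2 := by ext i; ring
    rw [this]
    exact ((hint2 x).sub ((hint x).const_mul _)).add (integrable_const _)
  have hvar : ∀ x, φ x ^ 2 + ∫ i, (φ (G i x) - φ x) ^ 2 ∂m = ∫ i, φ (G i x) ^ 2 ∂m := by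
    intro x
    have : (fun i => (φ (G i x) - φ x) ^ 2)
      = fun i => φ (G i x) ^ 2 - 2 * φ x * φ (G i x) + φ x ^ 2 := by ext i; ring
    have hi : Integrable (fun i => φ (G i x) ^ 2 - 2 * φ x * φ (G i x)) m :=
      (hint2 x).sub ((hint x).const_mul _)
    rw [this, integral_add hi (integrable_const _),
      integral_sub (hint2 x) ((hint x).const_mul _), integral_const_mul, hharm]
    simp
    ring
  have hw : Measurable fun x => ∫⁻ i, ENNReal.ofReal ((φ (G i x) - φ x) ^ 2) ∂m := by
    simp_rw [lintegral_countable']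
    refine Measurable.ennreal_tsum fun i => ?_
    exact ((((hφm.comp (hG i).cont.measurable).sub hφm).pow_const 2).ennreal_ofReal).mul_const _
  have key := ae_zero_of_potential hG hQ h hR (ψ := fun x => ENNReal.ofReal (φ x ^ 2)) hw
    (fun x => by
      rw [← ENNReal.ofReal_one]
      exact ENNReal.ofReal_le_ofReal (by nlinarith [hφ0 x, hφ1 x]))
    (fun x => by
      rw [← ofReal_integral_eq_lintegral_ofReal (hvint x) (Eventually.of_forall fun i => sq_nonneg _),
        ← ofReal_integral_eq_lintegral_ofReal (hint2 x) (Eventually.of_forall fun i => sq_nonneg _),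
        ← ENNReal.ofReal_add (sq_nonneg _) (integral_nonneg fun i => sq_nonneg _), hvar])
  filter_upwards [key] with x hx i
  rw [lintegral_eq_zero_iff (measurable_of_countable _)] at hx
  rw [EventuallyEq, ae_iff_of_countable] at hx
  have h1 := hx i (hpos i).ne'
  simp only [Pi.zero_apply, ENNReal.ofReal_eq_zero] at h1
  have h2 : φ (G i x) = φ x := by nlinarith [sq_nonneg (φ (G i x) - φ x)]
  exact (measureReal_eq_measureReal_iff).1 h2

lemma fiber_zero_one [IsFiniteMeasureOnCompacts ν] (hpos : ∀ i, 0 < m {i}) (hQ : IsProd m Q)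
    (h : pushM G m ν = ν) (hR : CondR G Q) {A : Set (ℝ × (ℕ → ι))} (hA : MeasurableSet A)
    (hinv : skew G ⁻¹' A = A) :
    ∀ᵐ x ∂ν, Q (Prod.mk x ⁻¹' A) = 0 ∨ Q (Prod.mk x ⁻¹' A) = 1 := by
  have : Nonempty ι := nonempty_of_isProbabilityMeasure m
  have := hQ.prob
  have hconst := fiber_const hG hpos hQ h hR hA hinv
  have hE : ∀ n, ∀ᵐ x ∂ν, ∀ c : ℕ → ι,
      Q (Prod.mk x ⁻¹' A ∩ cyl n c) = Q (Prod.mk x ⁻¹' A) * Q (cyl n c) := by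
    intro n
    induction n with
    | zero =>
      refine Eventually.of_forall fun x c => ?_
      have : (cyl 0 c) = univ := by simp [cyl]
      simp [this]
    | succ n ih =>
      filter_upwards [hconst, ae_step hG hpos h ih] with x hx1 hx2 c
      rw [fiber_step hG hQ hA hinv x (measurableSet_cyl _ _)]
      have h1 : ∀ i, Q (Prod.mk (G i x) ⁻¹' A ∩ consS i ⁻¹' cyl (n+1) c) =
          Q (Prod.mk x ⁻¹' A) * Q (consS i ⁻¹' cyl (n+1) c) := by
        intro i
        by_cases hi : i = c 0
        · have : consS i ⁻¹' cyl (n+1) c = cyl n (fun k => c (k+1)) := by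
            ext ω
            simp only [cyl, mem_preimage, mem_ofPred_eq]
            constructor
            · intro h k hk; exact h (k+1) (Nat.succ_lt_succ hk)
            · intro h k hk
              cases k with
              | zero => exact hi
              | succ k => exact h k (Nat.lt_of_succ_lt_succ hk)
          rw [this, hx2 i, hx1 i]
        · have : consS i ⁻¹' cyl (n+1) c = ∅ := by
            ext ω
            simp only [cyl, mem_preimage, mem_ofPred_eq, mem_empty_iff_false, iff_false]
            intro h
            exact hi (h 0 (Nat.succ_pos _))
          simp [this]
      simp_rw [h1]
      rw [lintegral_const_mul _ (measurable_of_countable _)]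
      congr 1
      have := fiber_step hG hQ (A := univ) MeasurableSet.univ rfl x (measurableSet_cyl (n+1) c)
      simp only [preimage_univ, univ_inter] at this
      exact this.symm
  rw [← ae_all_iff] at hE
  filter_upwards [hE] with x hx
  have hAx : MeasurableSet (Prod.mk x ⁻¹' A) := measurable_prodMk_left hA
  have h1 : Q.restrict (Prod.mk x ⁻¹' A) = Q (Prod.mk x ⁻¹' A) • Q := by
    refine ext_cyl fun n c => ?_
    rw [Measure.restrict_apply (measurableSet_cyl n c), inter_comm, hx n c]
    rfl
  have h2 := congrArg (fun P : Measure (ℕ → ι) => P (Prod.mk x ⁻¹' A)) h1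
  simp only [Measure.restrict_apply_self, Measure.smul_apply, smul_eq_mul] at h2
  by_cases h0 : Q (Prod.mk x ⁻¹' A) = 0
  · exact Or.inl h0
  · right
    have h3 : Q (Prod.mk x ⁻¹' A) * Q (Prod.mk x ⁻¹' A) = Q (Prod.mk x ⁻¹' A) * 1 := by
      rw [← h2, mul_one]
    exact (ENNReal.mul_right_inj h0 (measure_ne_top _ _)).1 h3

lemma skew_ergodic [IsFiniteMeasureOnCompacts ν] (hpos : ∀ i, 0 < m {i}) (hQ : IsProd m Q)
    (h : pushM G m ν = ν) (hR : CondR G Q) (herg : IsErg G m ν)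
    {A : Set (ℝ × (ℕ → ι))} (hA : MeasurableSet A)
    (hinv : skew G ⁻¹' A = A) : (ν.prod Q) A = 0 ∨ (ν.prod Q) Aᶜ = 0 := by
  have : Nonempty ι := nonempty_of_isProbabilityMeasure m
  have := hQ.prob
  set B : Set ℝ := {x | Q (Prod.mk x ⁻¹' A) = 1} with hBdef
  have hB : MeasurableSet B := measurable_measure_prodMk_left hA (measurableSet_singleton 1)
  have hBinv : pushM G m (ν.restrict B) = ν.restrict B := by
    ext s hs
    rw [pushM_apply hG hs, Measure.restrict_apply hs]
    have h1 := pushM_apply hG (m := m) (ν := ν) (hs.inter hB)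
    rw [h] at h1
    rw [h1]
    congr 1; ext i; congr 1
    rw [Measure.restrict_apply ((hG i).cont.measurable hs)]
    apply measure_congr
    filter_upwards [fiber_const hG hpos hQ h hR hA hinv] with x hx
    apply propext
    show (G i x ∈ s ∧ Q (Prod.mk x ⁻¹' A) = 1) ↔ (G i x ∈ s ∧ Q (Prod.mk (G i x) ⁻¹' A) = 1)
    rw [hx i]
  have h01 := fiber_zero_one hG hpos hQ h hR hA hinv
  have hfc : IsFiniteMeasureOnCompacts (ν.restrict B) :=
    ⟨fun K hK => (Measure.restrict_apply_le _ _).trans_lt hK.measure_lt_top⟩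
  rcases herg.2 B hB (isInv_of_pushM hG hBinv) with hz | hz
  · left
    rw [Measure.measure_prod_null hA]
    have : ∀ᵐ x ∂ν, x ∉ B := measure_eq_zero_iff_ae_notMem.1 hz
    filter_upwards [this, h01] with x hx1 hx2
    exact hx2.resolve_right hx1
  · right
    rw [Measure.measure_prod_null hA.compl]
    have : ∀ᵐ x ∂ν, x ∉ Bᶜ := measure_eq_zero_iff_ae_notMem.1 hz
    filter_upwards [this] with x hx1
    simp only [mem_compl_iff, not_not] at hx1
    rw [preimage_compl]
    exact (prob_compl_eq_zero_iff (measurable_prodMk_left hA)).2 hx1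

/-- negative mean implies Birkhoff sums bounded above -/
lemma birk_bdd [IsFiniteMeasureOnCompacts ν] (hpos : ∀ i, 0 < m {i}) (hQ : IsProd m Q)
    (h : pushM G m ν = ν) (hR : CondR G Q) (herg : IsErg G m ν)
    {g : ℝ → ℝ} (hgm : Measurable g) (hg : Integrable g ν) (hneg : ∫ x, g x ∂ν < 0) :
    ∀ᵐ x ∂ν, ∀ᵐ ω ∂Q, BddAbove (range fun n => ∑ k ∈ Finset.range n, g (chain G ω x k)) := by
  have : Nonempty ι := nonempty_of_isProbabilityMeasure m
  have := hQ.prob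
  set T := skew G
  set g' : ℝ × (ℕ → ι) → ℝ := fun z => g z.1
  have hg'm : Measurable g' := hgm.comp measurable_fst
  have hg' : Integrable g' (ν.prod Q) := hg.comp_fst Q
  have hg'i : ∫ z, g' z ∂(ν.prod Q) = ∫ x, g x ∂ν := by
    have := integral_fun_fst (μ := ν) (ν := Q) g
    simpa using this
  have hmp := skew_mp hG hQ h
  have hbm : ∀ n, Measurable (birkhoffSum T g' n) := by
    intro n
    unfold birkhoffSum
    exact Finset.measurable_sum _ fun k _ => hg'm.comp ((measurable_skew hG).iterate k)
  set A : Set (ℝ × (ℕ → ι)) := {z | ¬ BddAbove (range fun n => birkhoffSum T g' n z)} with hAdef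
  have hA : MeasurableSet A := (measurableSet_bddAbove_range hbm).compl
  have hinv : T ⁻¹' A = A := by
    ext z
    show ¬ BddAbove (range fun n => birkhoffSum T g' n (T z)) ↔
      ¬ BddAbove (range fun n => birkhoffSum T g' n z)
    rw [not_iff_not]
    constructor
    · rintro ⟨b, hb⟩
      refine ⟨max 0 (g' z + b), ?_⟩
      rintro _ ⟨n, rfl⟩
      cases n with
      | zero => simp
      | succ n =>
        simp only
        rw [birkhoffSum_succ']
        have := hb ⟨n, rfl⟩
        simp only at this
        exact le_max_of_le_right (by linarith)
    · rintro ⟨b, hb⟩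
      refine ⟨b - g' z, ?_⟩
      rintro _ ⟨n, rfl⟩
      have := hb ⟨n+1, rfl⟩
      simp only at this
      rw [birkhoffSum_succ'] at this
      simp only
      linarith
  have hA0 : (ν.prod Q) A = 0 := by
    rcases skew_ergodic hG hpos hQ h hR herg hA hinv with h0 | h0
    · exact h0
    · exfalso
      have h1 : ∀ᵐ z ∂(ν.prod Q), ∃ n, 0 < birkhoffSum T g' n z := by
        have : ∀ᵐ z ∂(ν.prod Q), z ∉ Aᶜ := measure_eq_zero_iff_ae_notMem.1 h0
        filter_upwards [this] with z hz
        by_contra hc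
        push Not at hc
        exact hz (fun hA => hA ⟨0, by rintro _ ⟨n, rfl⟩; exact hc n⟩)
      have h2 := maximal_ergodic hmp hg' hg'm h1
      linarith
  have hae : ∀ᵐ z ∂(ν.prod Q), z ∉ A := measure_eq_zero_iff_ae_notMem.1 hA0
  filter_upwards [Measure.ae_ae_of_ae_prod hae] with x hx
  filter_upwards [hx] with ω hω
  have : BddAbove (range fun n => birkhoffSum T g' n (x, ω)) := not_not.1 hω
  convert this using 3 with n
  unfold birkhoffSum
  refine Finset.sum_congr rfl fun k _ => ?_
  rw [skew_iterate]

end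

lemma invIter_succ {ι : Type*} (G : ι → ℝ → ℝ) (ω : ℕ → ι) (u : ℝ) (n : ℕ) :
    invIter G ω u (n+1) = invIter G ω (Function.invFun (G (ω n)) u) n := by
  simp [invIter, List.range_succ]

lemma chain_invIter {ι : Type*} {G : ι → ℝ → ℝ} (hG : ∀ i, IsOPH (G i)) (ω : ℕ → ι) (n : ℕ) :
    ∀ u, chain G ω (invIter G ω u n) n = u := by
  induction n with
  | zero => intro u; rfl
  | succ n ih =>
    intro u
    rw [invIter_succ, chain, ih]
    exact rightInverse_invFun (hG _).2 u

lemma eventually_not_sep {ι : Type*} {G : ι → ℝ → ℝ} (hG : ∀ i, IsOPH (G i)) {ω : ℕ → ι}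
    {u j₁ j₂ x y : ℝ} (hx : x ∈ Ioo j₁ j₂) (hy : y ∈ Ioo j₁ j₂) (hxy : x < y)
    (h : Set.Finite {n : ℕ | invIter G ω u n ∈ Ioo j₁ j₂}) :
    ∃ N, ∀ n ≥ N, (u < chain G ω x n ↔ u < chain G ω y n) := by
  obtain ⟨N, hN⟩ := h.bddAbove
  refine ⟨N+1, fun n hn => ?_⟩
  have hmono := chain_strictMono hG ω n
  constructor
  · intro h1; exact h1.trans (hmono hxy)
  · intro h1
    by_contra h2
    push Not at h2
    have h3 : x ≤ invIter G ω u n := by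
      rw [← hmono.le_iff_le]; simpa only [chain_invIter hG] using h2
    have h4 : invIter G ω u n < y := by
      rw [← hmono.lt_iff_lt]; simpa only [chain_invIter hG] using h1
    have : n ≤ N := hN ⟨lt_of_lt_of_le hx.1 h3, h4.trans hy.2⟩
    omega

section
variable {ι : Type*} [Countable ι] [MeasurableSpace ι] [DiscreteMeasurableSpace ι]
  {G : ι → ℝ → ℝ} (hG : ∀ i, IsOPH (G i))
  {m : Measure ι} [IsProbabilityMeasure m] {ν ν' : Measure ℝ} {Q : Measure (ℕ → ι)}
include hG

lemma compare [IsFiniteMeasureOnCompacts ν] [IsFiniteMeasureOnCompacts ν']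
    (hpos : ∀ i, 0 < m {i}) (hQ : IsProd m Q) (hR : CondR G Q)
    (h : pushM G m ν = ν) (herg : IsErg G m ν) (h' : pushM G m ν' = ν') (herg' : IsErg G m ν')
    {j₁ j₂ : ℝ} {U U' : Set ℝ} (hU : U ⊆ Ioo j₁ j₂) (hU' : U' ⊆ Ioo j₁ j₂)
    (hUU : ∀ x ∈ U, ∀ y ∈ U', x < y) (hUν : ν U ≠ 0) (hUν' : ν' U' ≠ 0)
    {u v v' a b : ℝ} (t : ℝ)
    (htu : ∀ᵐ ω ∂Q, Set.Finite {n : ℕ | invIter G ω u n ∈ Ioo j₁ j₂})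
    (htv : ∀ᵐ ω ∂Q, Set.Finite {n : ℕ | invIter G ω v n ∈ Ioo j₁ j₂})
    (htv' : ∀ᵐ ω ∂Q, Set.Finite {n : ℕ | invIter G ω v' n ∈ Ioo j₁ j₂})
    (hab : ∀ x : ℝ, ∀ᵐ ω ∂Q, ∃ᶠ n in atTop, chain G ω x n ∈ Icc a b)
    (hI : Icc a b ⊆ Ioc v v')
    (hK : 0 < ν.real (Ioc v v')) (hK' : 0 < ν'.real (Ioc v v')) :
    ν'.real (Ioc u t) / ν'.real (Ioc v v') ≤ ν.real (Ioc u t) / ν.real (Ioc v v') := by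
  have : Nonempty ι := nonempty_of_isProbabilityMeasure m
  have := hQ.prob
  have : IsLocallyFiniteMeasure ν := isLocallyFiniteMeasure_of_isFiniteMeasureOnCompacts
  have : IsLocallyFiniteMeasure ν' := isLocallyFiniteMeasure_of_isFiniteMeasureOnCompacts
  by_contra hlt
  push Not at hlt
  obtain ⟨c, hc1, hc⟩ := exists_between hlt
  obtain ⟨c', hcc, hc2⟩ := exists_between hc
  rw [div_lt_iff₀ hK] at hc1
  rw [lt_div_iff₀ hK'] at hc2
  set f : ℝ → ℝ := (Ioc u t).indicator 1 with hf
  set k : ℝ → ℝ := (Ioc v v').indicator 1 with hk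
  have hfm : Measurable f := measurable_one.indicator measurableSet_Ioc
  have hkm : Measurable k := measurable_one.indicator measurableSet_Ioc
  have hint : ∀ (η : Measure ℝ) [IsLocallyFiniteMeasure η] (p q : ℝ),
      Integrable ((Ioc p q).indicator (1 : ℝ → ℝ)) η := by
    intro η _ p q
    exact (integrable_indicator_iff measurableSet_Ioc).2
      (integrableOn_const measure_Ioc_lt_top.ne)
  have hg1 := birk_bdd hG hpos hQ h hR herg (g := fun x => f x - c * k x)
    (hfm.sub (hkm.const_mul c)) ((hint ν u t).sub ((hint ν v v').const_mul c)) (by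
      rw [integral_sub (hint ν u t) ((hint ν v v').const_mul c), integral_const_mul,
        integral_indicator_one measurableSet_Ioc, integral_indicator_one measurableSet_Ioc]
      linarith)
  have hg2 := birk_bdd hG hpos hQ h' hR herg' (g := fun x => c' * k x - f x)
    ((hkm.const_mul c').sub hfm) (((hint ν' v v').const_mul c').sub (hint ν' u t)) (by
      rw [integral_sub ((hint ν' v v').const_mul c') (hint ν' u t), integral_const_mul,
        integral_indicator_one measurableSet_Ioc, integral_indicator_one measurableSet_Ioc]
      linarith)
  obtain ⟨x, hxU, hx⟩ : ∃ x ∈ U, ∀ᵐ ω ∂Q, BddAbove (range fun n =>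
      ∑ j ∈ Finset.range n, (f (chain G ω x j) - c * k (chain G ω x j))) := by
    by_contra hcon
    exact hUν (measure_mono_null (fun x hx hgood => hcon ⟨x, hx, hgood⟩) hg1)
  obtain ⟨y, hyU, hy⟩ : ∃ y ∈ U', ∀ᵐ ω ∂Q, BddAbove (range fun n =>
      ∑ j ∈ Finset.range n, (c' * k (chain G ω y j) - f (chain G ω y j))) := by
    by_contra hcon
    exact hUν' (measure_mono_null (fun x hx hgood => hcon ⟨x, hx, hgood⟩) hg2)
  have hxy := hUU x hxU y hyU
  obtain ⟨ω, ⟨b1, hb1⟩, ⟨b2, hb2⟩, hrec, h1, h2, h3⟩ :=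
    (hx.and (hy.and ((hab x).and (htu.and (htv.and htv'))))).exists
  obtain ⟨N1, hN1⟩ := eventually_not_sep hG (hU hxU) (hU' hyU) hxy h1
  obtain ⟨N2, hN2⟩ := eventually_not_sep hG (hU hxU) (hU' hyU) hxy h2
  obtain ⟨N3, hN3⟩ := eventually_not_sep hG (hU hxU) (hU' hyU) hxy h3
  set N := max N1 (max N2 N3)
  have hff : ∀ n ≥ N, f (chain G ω y n) ≤ f (chain G ω x n) := by
    intro n hn
    have e1 := hN1 n (le_trans (le_max_left _ _) hn)
    have hm : chain G ω x n < chain G ω y n := chain_strictMono hG ω n hxy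
    by_cases hyf : chain G ω y n ∈ Ioc u t
    · have : chain G ω x n ∈ Ioc u t := ⟨e1.2 hyf.1, hm.le.trans hyf.2⟩
      simp [hf, hyf, this]
    · have : f (chain G ω y n) = 0 := indicator_of_notMem hyf _
      rw [this]
      exact indicator_nonneg (fun _ _ => zero_le_one) _
  have hkk : ∀ n ≥ N, k (chain G ω y n) = k (chain G ω x n) := by
    intro n hn
    have e2 := hN2 n (le_trans (le_trans (le_max_left _ _) (le_max_right _ _)) hn)
    have e3 := hN3 n (le_trans (le_trans (le_max_right _ _) (le_max_right _ _)) hn)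
    have : chain G ω y n ∈ Ioc v v' ↔ chain G ω x n ∈ Ioc v v' := by
      simp only [mem_Ioc, e2]
      rw [← not_lt, ← not_lt (b := chain G ω x n), e3]
    simp only [hk, indicator, this, Pi.one_apply]
  -- total
  set d : ℕ → ℝ := fun n => (f (chain G ω x n) - c * k (chain G ω x n)) +
    (c' * k (chain G ω y n) - f (chain G ω y n)) with hd
  have hdn : ∀ n ≥ N, (c' - c) * k (chain G ω x n) ≤ d n := by
    intro n hn
    have := hff n hn
    have := hkk n hn
    simp only [hd, this]
    linarith
  have hsum : ∀ n, ∑ j ∈ Finset.range n, d j ≤ b1 + b2 := by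
    intro n
    simp only [hd]
    rw [Finset.sum_add_distrib]
    exact add_le_add (hb1 ⟨n, rfl⟩) (hb2 ⟨n, rfl⟩)
  have hk0 : ∀ z, 0 ≤ k z := fun z => indicator_nonneg (fun _ _ => zero_le_one) _
  have hsummable : Summable fun n => (c' - c) * k (chain G ω x (n + N)) := by
    refine summable_of_sum_range_le (c := b1 + b2 - ∑ j ∈ Finset.range N, d j)
      (fun n => mul_nonneg (by linarith) (hk0 _)) fun n => ?_
    have e1 := hsum (N + n)
    rw [Finset.sum_range_add] at e1
    have e2 : ∑ i ∈ Finset.range n, (c' - c) * k (chain G ω x (i + N))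
        ≤ ∑ i ∈ Finset.range n, d (N + i) := by
      refine Finset.sum_le_sum fun i _ => ?_
      rw [add_comm i N]
      exact hdn _ (Nat.le_add_right _ _)
    linarith
  have hlim := hsummable.tendsto_atTop_zero
  have hlim2 : Tendsto (fun n => (c' - c) * k (chain G ω x n)) atTop (𝓝 0) :=
    (tendsto_add_atTop_iff_nat N).1 hlim
  have hev := hlim2.eventually (gt_mem_nhds (show (0:ℝ) < c' - c by linarith))
  obtain ⟨n, hn1, hn2⟩ := (hrec.and_eventually hev).exists
  have : k (chain G ω x n) = 1 := by
    simp [hk, hI hn1]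
  rw [this] at hn2
  linarith

lemma main_discrete (hpos : ∀ i, 0 < m {i}) (hQ : IsProd m Q) (hR : CondR G Q)
    {ν₁ ν₂ : Measure ℝ} (hrad₁ : IsRadon ν₁) (herg₁ : IsErg G m ν₁)
    (hrad₂ : IsRadon ν₂) (herg₂ : IsErg G m ν₂)
    (hsupp : msupp ν₁ ⊆ msupp ν₂)
    (M : Set ℝ) (hMa : ¬ BddAbove M) (hMb : ¬ BddBelow M) (j₁ j₂ : ℝ)
    (hJ : ∃ y₁ ∈ Ioo j₁ j₂ ∩ msupp ν₁, ∃ y₂ ∈ Ioo j₁ j₂ ∩ msupp ν₁, y₁ ≠ y₂)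
    (htrans : ∀ u ∈ M, ∀ᵐ ω ∂Q, Set.Finite {n : ℕ | invIter G ω u n ∈ Ioo j₁ j₂}) :
    ∃ C : ℝ≥0, 0 < C ∧ ν₁ = C • ν₂ := by
  obtain ⟨y₁, hy₁, y₂, hy₂, hlt⟩ : ∃ y₁ ∈ Ioo j₁ j₂ ∩ msupp ν₁,
      ∃ y₂ ∈ Ioo j₁ j₂ ∩ msupp ν₁, y₁ < y₂ := by
    obtain ⟨y₁, h1, y₂, h2, hne⟩ := hJ
    rcases lt_or_gt_of_ne hne with h | h
    · exact ⟨y₁, h1, y₂, h2, h⟩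
    · exact ⟨y₂, h2, y₁, h1, h⟩
  obtain ⟨q, hq1, hq2⟩ := exists_between hlt
  have hU : ∀ ν, y₁ ∈ msupp ν → ν (Ioo j₁ q) ≠ 0 := fun ν h =>
    (h _ isOpen_Ioo ⟨hy₁.1.1, hq1⟩).ne'
  have hU' : ∀ ν, y₂ ∈ msupp ν → ν (Ioo q j₂) ≠ 0 := fun ν h =>
    (h _ isOpen_Ioo ⟨hq2, hy₂.1.2⟩).ne'
  have hqj : q < j₂ := hq2.trans hy₂.1.2
  have hjq : j₁ < q := hy₁.1.1.trans hq1
  have hn1 : ν₁ ≠ 0 := fun h => hU ν₁ hy₁.2 (by simp [h])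
  have hn2 : ν₂ ≠ 0 := fun h => hU ν₂ (hsupp hy₁.2) (by simp [h])
  have hp1 := pushM_of_isInv hG hrad₁ hn1 herg₁.1
  have hp2 := pushM_of_isInv hG hrad₂ hn2 herg₂.1
  have : IsFiniteMeasureOnCompacts ν₁ := ⟨fun K hK => hrad₁ K hK⟩
  have : IsFiniteMeasureOnCompacts ν₂ := ⟨fun K hK => hrad₂ K hK⟩
  have : IsLocallyFiniteMeasure ν₁ := isLocallyFiniteMeasure_of_isFiniteMeasureOnCompacts
  have : IsLocallyFiniteMeasure ν₂ := isLocallyFiniteMeasure_of_isFiniteMeasureOnCompacts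
  have hR' := hR
  obtain ⟨a, b, -, hab⟩ := hR'
  have hlow : ∀ x, ∃ u ∈ M, u < x := by
    intro x; by_contra hc; push Not at hc; exact hMb ⟨x, fun u hu => hc u hu⟩
  have hhigh : ∀ x, ∃ u ∈ M, x < u := by
    intro x; by_contra hc; push Not at hc; exact hMa ⟨x, fun u hu => hc u hu⟩
  obtain ⟨v, hvM, hv⟩ := hlow (min a j₁)
  obtain ⟨v', hvM', hv'⟩ := hhigh (max b j₂)
  have hI : Icc a b ⊆ Ioc v v' := fun x hx =>
    ⟨lt_of_lt_of_le (lt_of_lt_of_le hv (min_le_left _ _)) hx.1,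
      hx.2.trans ((le_max_left _ _).trans hv'.le)⟩
  have hJK : Ioo j₁ q ⊆ Ioc v v' := fun x hx =>
    ⟨lt_of_le_of_lt (hv.le.trans (min_le_right _ _)) hx.1,
      (hx.2.trans hqj).le.trans ((le_max_right _ _).trans hv'.le)⟩
  have hK : ∀ ν : Measure ℝ, [IsLocallyFiniteMeasure ν] → y₁ ∈ msupp ν → 0 < ν.real (Ioc v v') := by
    intro ν _ h
    refine ENNReal.toReal_pos (fun h0 => hU ν h (measure_mono_null hJK h0)) measure_Ioc_lt_top.ne
  have hK1 := hK ν₁ hy₁.2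
  have hK2 := hK ν₂ (hsupp hy₁.2)
  have hUs : Ioo j₁ q ⊆ Ioo j₁ j₂ := Ioo_subset_Ioo le_rfl hqj.le
  have hUs' : Ioo q j₂ ⊆ Ioo j₁ j₂ := Ioo_subset_Ioo hjq.le le_rfl
  have hsep : ∀ x ∈ Ioo j₁ q, ∀ y ∈ Ioo q j₂, x < y := fun x hx y hy => hx.2.trans hy.1
  set C : ℝ := ν₁.real (Ioc v v') / ν₂.real (Ioc v v') with hC
  have hCpos : 0 < C := div_pos hK1 hK2
  have hreal : ∀ u ∈ M, ∀ t, ν₁.real (Ioc u t) = C * ν₂.real (Ioc u t) := by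
    intro u hu t
    have e1 := compare hG hpos hQ hR hp1 herg₁ hp2 herg₂ hUs hUs' hsep (hU _ hy₁.2)
      (hU' _ (hsupp hy₂.2)) t (htrans u hu) (htrans v hvM) (htrans v' hvM') hab hI hK1 hK2
    have e2 := compare hG hpos hQ hR hp2 herg₂ hp1 herg₁ hUs hUs' hsep (hU _ (hsupp hy₁.2))
      (hU' _ hy₂.2) t (htrans u hu) (htrans v hvM) (htrans v' hvM') hab hI hK2 hK1
    have e3 := le_antisymm e1 e2
    rw [hC]
    field_simp at e3 ⊢
    linarith
  refine ⟨C.toNNReal, Real.toNNReal_pos.2 hCpos, ?_⟩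
  have hens : ∀ u ∈ M, ∀ t, ν₁ (Ioc u t) = (C.toNNReal : ℝ≥0∞) * ν₂ (Ioc u t) := by
    intro u hu t
    have := hreal u hu t
    rw [← ENNReal.toReal_eq_toReal_iff' measure_Ioc_lt_top.ne
      (ENNReal.mul_ne_top ENNReal.coe_ne_top measure_Ioc_lt_top.ne), ENNReal.toReal_mul, ENNReal.coe_toReal, Real.coe_toNNReal _ hCpos.le]
    exact this
  refine Measure.ext_of_Ioc _ _ fun x y hxy => ?_
  obtain ⟨u, hu, hux⟩ := hlow x
  have hdiff : Ioc x y = Ioc u y \ Ioc u x := by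
    ext z; simp only [mem_Ioc, mem_diff]
    constructor
    · rintro ⟨h1, h2⟩; exact ⟨⟨hux.trans h1, h2⟩, fun h => absurd h.2 (not_le.2 h1)⟩
    · rintro ⟨⟨h1, h2⟩, h3⟩
      exact ⟨by by_contra hc; exact h3 ⟨h1, not_lt.1 hc⟩, h2⟩
  have hss : Ioc u x ⊆ Ioc u y := Ioc_subset_Ioc_right hxy.le
  rw [hdiff, measure_diff hss measurableSet_Ioc.nullMeasurableSet measure_Ioc_lt_top.ne,
    Measure.smul_apply, measure_diff hss measurableSet_Ioc.nullMeasurableSet measure_Ioc_lt_top.ne,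
    hens u hu, hens u hu, ENNReal.smul_def, smul_eq_mul, ENNReal.mul_sub]
  intro _ _; exact ENNReal.coe_ne_top

end

lemma visits {ι : Type*} [Countable ι] [MeasurableSpace ι] [DiscreteMeasurableSpace ι]
    {G : ι → ℝ → ℝ} (hG : ∀ i, IsOPH (G i)) {m : Measure ι} [IsProbabilityMeasure m]
    {Q : Measure (ℕ → ι)} (hQ : IsProd m Q) {a b : ℝ}
    (hab : ∀ x : ℝ, ∀ᵐ ω ∂Q, ∃ᶠ n in atTop, chain G ω x n ∈ Icc a b) :
    ∃ h : ℕ → ℝ → ℝ≥0∞, (∀ n, Measurable (h n)) ∧ h 0 = (Icc a b).indicator 1 ∧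
      (∀ n x, h (n + 1) x = ∑' i, m {i} * h n (G i x)) ∧ ∀ x, ∑' n, h n x = ∞ := by
  have : Nonempty ι := by
    by_contra hne
    rw [not_nonempty_iff] at hne
    have h1 := measure_univ (μ := m)
    rw [univ_eq_empty_iff.2 hne] at h1
    simp at h1
  have hprob : IsProbabilityMeasure Q := hQ.prob
  have hmeas : ∀ n, Measurable fun z : ℝ × (ℕ → ι) =>
      (Icc a b).indicator (1 : ℝ → ℝ≥0∞) (chain G z.2 z.1 n) := fun n =>
    (measurable_one.indicator measurableSet_Icc).comp (measurable_chain hG n)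
  have hmx : ∀ n x, Measurable fun ω : ℕ → ι =>
      (Icc a b).indicator (1 : ℝ → ℝ≥0∞) (chain G ω x n) := fun n x =>
    (hmeas n).comp measurable_prodMk_left
  refine ⟨fun n x => ∫⁻ ω, (Icc a b).indicator 1 (chain G ω x n) ∂Q, fun n => ?_, ?_, ?_, ?_⟩
  · exact (hmeas n).lintegral_prod_right'
  · funext x
    simp [chain]
  · intro n x
    simp only []
    rw [lintegral_consS hQ (hmx (n + 1) x), lintegral_countable']
    simp only [chain_cons]
    exact tsum_congr fun i => mul_comm _ _
  · intro x
    simp only []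
    rw [← lintegral_tsum fun n => (hmx n x).aemeasurable]
    have : (fun ω : ℕ → ι => ∑' n, (Icc a b).indicator (1 : ℝ → ℝ≥0∞) (chain G ω x n))
        =ᵐ[Q] fun _ => ∞ := by
      filter_upwards [hab x] with ω hω
      refine tsum_indicator_top hω one_ne_zero fun n hn => ?_
      rw [indicator_of_mem hn]; rfl
    rw [lintegral_congr_ae this]
    simp

lemma exists_selector (ι : Type*) [Countable ι] [MeasurableSpace ι] :
    ∃ s : ι → ι, (∀ A, MeasurableSet A → ∀ i, s i ∈ A ↔ i ∈ A) ∧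
      (∀ i, s (s i) = s i) ∧ ∀ B : Set ι, MeasurableSet (s ⁻¹' B) := by
  let r : Setoid ι := ⟨fun i j => ∀ A, MeasurableSet A → (i ∈ A ↔ j ∈ A),
    fun i A _ => Iff.rfl, fun h A hA => (h A hA).symm, fun h h' A hA => (h A hA).trans (h' A hA)⟩
  let s : ι → ι := fun i => (Quotient.mk r i).out
  have h1 : ∀ A, MeasurableSet A → ∀ i, s i ∈ A ↔ i ∈ A := fun A hA i =>
    (Quotient.mk_out (s := r) i) A hA
  have h2 : ∀ i j, (∀ A, MeasurableSet A → (i ∈ A ↔ j ∈ A)) → s i = s j := by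
    intro i j h
    have : Quotient.mk r i = Quotient.mk r j := Quotient.sound h
    simp only [s, this]
  refine ⟨s, h1, fun i => h2 _ _ fun A hA => h1 A hA i, fun B => ?_⟩
  have : s ⁻¹' B = ⋃ i ∈ s ⁻¹' B, measurableAtom i := by
    ext j
    simp only [mem_iUnion, exists_prop]
    constructor
    · intro hj
      exact ⟨j, hj, mem_measurableAtom_self j⟩
    · rintro ⟨i, hi, hj⟩
      have : s j = s i := by
        refine h2 _ _ fun A hA => ⟨fun hjA => ?_, fun hiA => ?_⟩
        · by_contra hiA
          exact mem_of_mem_measurableAtom hj hA.compl hiA hjA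
        · exact mem_of_mem_measurableAtom hj hA hiA
      rw [mem_preimage, this]; exact hi
  rw [this]
  exact MeasurableSet.biUnion (to_countable _) fun i _ => MeasurableSet.measurableAtom_of_countable i

lemma seq_invariant {ι : Type*} [MeasurableSpace ι] {s : ι → ι}
    (hs : ∀ A, MeasurableSet A → ∀ i, s i ∈ A ↔ i ∈ A) {N : Set (ℕ → ι)} (hN : MeasurableSet N)
    (ω : ℕ → ι) : (s ∘ ω) ∈ N ↔ ω ∈ N := by
  have hle : (MeasurableSpace.pi : MeasurableSpace (ℕ → ι)) ≤
      MeasurableSpace.invariants (fun ω : ℕ → ι => s ∘ ω) := by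
    refine iSup_le fun k => ?_
    rintro B ⟨A, hA, rfl⟩
    rw [MeasurableSpace.measurableSet_invariants]
    refine ⟨measurable_pi_apply k hA, ?_⟩
    ext ω
    exact hs A hA (ω k)
  have := (MeasurableSpace.measurableSet_invariants.1 (hle N hN)).2
  exact iff_of_eq (congrFun this ω)

lemma chain_comp {ι κ : Type*} (G : ι → ℝ → ℝ) (v : κ → ι) (ω : ℕ → κ) (x : ℝ) (n : ℕ) :
    chain (fun j => G (v j)) ω x n = chain G (v ∘ ω) x n := by
  induction n with
  | zero => rfl
  | succ n ih => simp [chain, ih]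

set_option maxHeartbeats 1000000 in
lemma discrete_of_inv {ι : Type*} [Countable ι] [MeasurableSpace ι]
    {G : ι → ℝ → ℝ} (hG : ∀ i, IsOPH (G i)) {m : Measure ι} [IsProbabilityMeasure m]
    (hpos : ∀ i, 0 < m {i}) {Q : Measure (ℕ → ι)} (hQ : IsProd m Q) (hR : CondR G Q)
    {ν : Measure ℝ} (hrad : IsRadon ν) (h0 : ν ≠ 0) (hp : pushM G m ν = ν) :
    DiscreteMeasurableSpace ι := by
  obtain ⟨s, hs, hss, hsm⟩ := exists_selector ι
  suffices hid : ∀ i, s i = i by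
    refine ⟨fun B => ?_⟩
    have := hsm B
    rwa [show s = id from funext hid, preimage_id] at this
  intro i₀
  by_contra hi₀
  let κ := {j : ι // s j = j}
  let t : ι → κ := fun i => ⟨s i, hss i⟩
  have hdisc : DiscreteMeasurableSpace κ := by
    refine ⟨fun B => ⟨s ⁻¹' (Subtype.val '' B), hsm _, ?_⟩⟩
    ext ⟨j, hj⟩
    simp only [mem_preimage, hj, Subtype.exists, mem_image]
    constructor
    · rintro ⟨a, ha, hB, rfl⟩; exact hB
    · intro h; exact ⟨j, hj, h, rfl⟩
  have htm : Measurable t := by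
    intro B _
    have : t ⁻¹' B = s ⁻¹' (Subtype.val '' B) := by
      ext i
      simp only [mem_preimage, mem_image]
      constructor
      · intro h; exact ⟨_, h, rfl⟩
      · rintro ⟨k, hk, hki⟩
        have : t i = k := Subtype.ext hki.symm
        rwa [this]
    rw [this]; exact hsm _
  have hTm : Measurable (fun ω : ℕ → ι => t ∘ ω) :=
    measurable_pi_lambda _ fun k => htm.comp (measurable_pi_apply k)
  have hm0 : ∀ j : κ, m.map t {j} = m {j.1} := by
    intro j
    rw [Measure.map_apply htm (measurableSet_singleton _)]
    refine le_antisymm ?_ (measure_mono ?_)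
    · rw [← measure_toMeasurable ({j.1} : Set ι)]
      refine measure_mono fun i hi => ?_
      have hi' : s i = j.1 := congrArg Subtype.val (show t i = j from hi)
      rw [← hs _ (measurableSet_toMeasurable _ _), hi']
      exact subset_toMeasurable _ _ rfl
    · rintro i rfl
      exact Subtype.ext j.2
  have : IsProbabilityMeasure (m.map t) := Measure.isProbabilityMeasure_map htm.aemeasurable
  have hQ0 : IsProd (m.map t) (Q.map fun ω => t ∘ ω) := by
    intro n c
    simp only [hm0]
    rw [← hQ n (fun k => (c k).1)]
    change _ = Q (cyl n fun k => (c k).1)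
    change (Q.map fun ω => t ∘ ω) (cyl n c) = _
    rw [Measure.map_apply hTm (measurableSet_cyl n c)]
    refine le_antisymm ?_ (measure_mono ?_)
    · rw [← measure_toMeasurable (cyl n fun k => (c k).1)]
      refine measure_mono fun ω hω => ?_
      set H := toMeasurable Q (cyl n fun k => (c k).1) with hH
      have hHm : MeasurableSet H := measurableSet_toMeasurable _ _
      have hω' : (fun k => if k < n then (c k).1 else ω k) ∈ H := by
        refine subset_toMeasurable _ _ fun k hk => ?_
        simp [hk]
      rw [← seq_invariant hs hHm] at hω' ⊢
      convert hω' using 1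
      funext k
      simp only [comp_apply]
      split_ifs with hk
      · rw [(c k).2]
        exact congrArg Subtype.val (hω k hk)
      · rfl
    · intro ω hω k hk
      have : ω k = (c k).1 := hω k hk
      exact Subtype.ext (by simp [t, this, (c k).2])
  obtain ⟨a, b, -, hab⟩ := hR
  have hab' : ∀ x : ℝ, ∀ᵐ ω ∂(Q.map fun ω => t ∘ ω),
      ∃ᶠ n in atTop, chain (fun j : κ => G j.1) ω x n ∈ Icc a b := by
    intro x
    have hG' : ∀ j : κ, IsOPH (G j.1) := fun j => hG _
    have hms : MeasurableSet {ω : ℕ → κ | ∃ᶠ n in atTop,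
        chain (fun j : κ => G j.1) ω x n ∈ Icc a b} := by
      have : {ω : ℕ → κ | ∃ᶠ n in atTop, chain (fun j : κ => G j.1) ω x n ∈ Icc a b}
          = limsup (fun n => {ω : ℕ → κ | chain (fun j : κ => G j.1) ω x n ∈ Icc a b}) atTop := by
        ext ω
        rw [mem_limsup_iff_frequently_mem]
        rfl
      rw [this]
      refine MeasurableSet.measurableSet_limsup fun n => ?_
      exact ((measurable_chain hG' n).comp measurable_prodMk_left) measurableSet_Icc
    rw [ae_map_iff hTm.aemeasurable hms]
    have hbad := ae_iff.1 (hab x)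
    set H := toMeasurable Q {ω | ¬ ∃ᶠ n in atTop, chain G ω x n ∈ Icc a b} with hH
    have hHm : MeasurableSet H := measurableSet_toMeasurable _ _
    have hH0 : Q H = 0 := by rw [hH, measure_toMeasurable]; exact hbad
    filter_upwards [measure_eq_zero_iff_ae_notMem.1 hH0] with ω hω
    by_contra hc
    apply hω
    rw [← seq_invariant hs hHm]
    apply subset_toMeasurable
    intro hf
    refine hc (hf.mono fun n hn => ?_)
    rw [chain_comp G (fun j : κ => j.1)]
    exact hn
  obtain ⟨h, hhm, hh0, hhs, hht⟩ := visits (G := fun j : κ => G j.1) (fun j => hG _) hQ0 hab'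
  have hhc : ∀ n i, Measurable fun x => h n (G i x) := fun n i => (hhm n).comp (hG i).cont.measurable
  have hstep : ∀ n, m {i₀} * ∫⁻ x, h n (G i₀ x) ∂ν + ∫⁻ x, h (n + 1) x ∂ν ≤ ∫⁻ x, h n x ∂ν := by
    intro n
    have e1 : ∫⁻ x, h (n + 1) x ∂ν = ∑' j : κ, m {j.1} * ∫⁻ x, h n (G j.1 x) ∂ν := by
      simp only [hhs, hm0]
      rw [lintegral_tsum fun j : κ =>
        ((hhc n j.1).const_mul _).aemeasurable]
      exact tsum_congr fun j => lintegral_const_mul _ (hhc n j.1)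
    have e2 : ∫⁻ x, h n x ∂ν = ∑' i, m {i} * ∫⁻ x, h n (G i x) ∂ν := by
      conv_lhs => rw [← hp]
      exact lintegral_pushM hG (hhm n)
    rw [e1, e2]
    set F : ι → ℝ≥0∞ := fun i => m {i} * ∫⁻ x, h n (G i x) ∂ν with hF
    classical
    rw [ENNReal.tsum_eq_add_tsum_ite i₀]
    refine add_le_add le_rfl ?_
    refine le_trans (le_of_eq (tsum_congr fun j => ?_)) (ENNReal.tsum_comp_le_tsum_of_injective
      (Subtype.val_injective : Injective (Subtype.val : κ → ι)) _)
    have hj : j.1 ≠ i₀ := fun hj => hi₀ (by rw [← hj]; exact j.2)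
    simp [hj, hF]
  have htel : ∀ n, ∑ k ∈ Finset.range n, m {i₀} * ∫⁻ x, h k (G i₀ x) ∂ν + ∫⁻ x, h n x ∂ν
      ≤ ∫⁻ x, h 0 x ∂ν := by
    intro n
    induction n with
    | zero => simp
    | succ n ih =>
      rw [Finset.sum_range_succ, add_assoc]
      exact (add_le_add le_rfl (hstep n)).trans ih
  have hfin : ∫⁻ x, h 0 x ∂ν < ∞ := by
    rw [hh0, lintegral_indicator_one measurableSet_Icc]
    exact hrad _ isCompact_Icc
  have hle : ∑' k, m {i₀} * ∫⁻ x, h k (G i₀ x) ∂ν ≤ ∫⁻ x, h 0 x ∂ν := by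
    rw [ENNReal.tsum_eq_iSup_nat]
    exact iSup_le fun n => le_self_add.trans (htel n)
  rw [ENNReal.tsum_mul_left, ← lintegral_tsum fun n =>
    (hhc n i₀).aemeasurable] at hle
  simp only [hht, lintegral_const] at hle
  rw [ENNReal.top_mul (by simpa using h0), ENNReal.mul_top (hpos i₀).ne'] at hle
  exact absurd (lt_of_le_of_lt hle hfin) (lt_irrefl _)

/-- **Proposition.** Assume (R). Let `ν₁, ν₂` be ergodic invariant Radon measures with
`supp ν₁ ⊆ supp ν₂`. If there are a set `M` unbounded on both sides and an open
interval `J` containing two points of `supp ν₁` such that for every `u ∈ M`, almost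
surely `ℓ_n⁻¹(u) ∈ J` only finitely often, then `ν₁ = C • ν₂` for some `C > 0`. -/
theorem ergodic_measures_proportional_of_transient_interval
    {ι : Type*} [Countable ι] [MeasurableSpace ι]
    (G : ι → ℝ → ℝ) (hG : ∀ i, IsOPH (G i))
    (μm : Measure ι) [IsProbabilityMeasure μm] (hpos : ∀ i, 0 < μm {i})
    (Q : Measure (ℕ → ι)) (hQ : IsProd μm Q)
    (hR : CondR G Q)
    (ν₁ ν₂ : Measure ℝ)
    (hrad₁ : IsRadon ν₁) (herg₁ : IsErg G μm ν₁)
    (hrad₂ : IsRadon ν₂) (herg₂ : IsErg G μm ν₂)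
    (hsupp : msupp ν₁ ⊆ msupp ν₂)
    (M : Set ℝ) (hMa : ¬ BddAbove M) (hMb : ¬ BddBelow M)
    (j₁ j₂ : ℝ)
    (hJ : ∃ y₁ ∈ Ioo j₁ j₂ ∩ msupp ν₁, ∃ y₂ ∈ Ioo j₁ j₂ ∩ msupp ν₁, y₁ ≠ y₂)
    (htrans : ∀ u ∈ M, ∀ᵐ ω ∂Q,
      Set.Finite {n : ℕ | invIter G ω u n ∈ Ioo j₁ j₂}) :
    ∃ C : ℝ≥0, 0 < C ∧ ν₁ = C • ν₂ := by
  have hn1 : ν₁ ≠ 0 := by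
    rintro rfl
    obtain ⟨y₁, hy₁, -⟩ := hJ
    have := hy₁.2 univ isOpen_univ (mem_univ _)
    simp at this
  have := discrete_of_inv hG hpos hQ hR hrad₁ hn1 (pushM_of_isInv hG hrad₁ hn1 herg₁.1)
  exact main_discrete hG hpos hQ hR hrad₁ herg₁ hrad₂ herg₂ hsupp M hMa hMb j₁ j₂ hJ htrans
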